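/- Fix real constants r > 0, δ ≥ 0, Δ ≥ δ, c with 1 < c < 2, and suppose r < 1/(5c² + 2) and r ≤ 1/(6c³). Consider any x₀ = (x₁(0), x₂(0)) ∈ ℝ², any Lebesgue measurable locally bounded inputs d₁ : [0, ∞) → [δ, Δ], d₂ : [0, ∞) → [−1, 1], d̃ : [0, ∞) → [0, ∞), v : [0, ∞) → ℝ, any sequence of sampling times τ₀ = 0, τ_{i+1} = τ_i + r·exp(−d̃(τ_i)), and any function x = (x₁, x₂) : [0, ∞) → ℝ² with x(0) = x₀ which is absolutely continuous on each interval [τ_i, τ_{i+1}] and satisfies, for almost every t ∈ [τ_i, τ_{i+1}), ẋ₁(t) = −2x₁(t) − d₁(t)x₁(t)³ + x₂(t) and ẋ₂(t) = d₂(t)x₂(t)² − x₂(t)³ − 2x₂(τ_i) + v(t). Then there exists a function σ of class KL, depending only on r, δ, Δ, c (not on x₀, d₁, d₂, d̃, v), such that |x(t)| ≤ σ(|x₀|, t) + 2√2 · sup_{0 ≤ τ ≤ t} |v(τ)| for all t ≥ 0. -/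

import Mathlib

/-- A function `γ : [0,∞) → [0,∞)` is of class `K` if it is continuous,
strictly increasing and `γ 0 = 0`. -/
def ClassK (γ : ℝ → ℝ) : Prop :=
  ContinuousOn γ (Set.Ici 0) ∧ StrictMonoOn γ (Set.Ici 0) ∧ γ 0 = 0

/-- A function `σ : [0,∞) × [0,∞) → [0,∞)` is of class `KL` if it is continuous,
for each fixed `t ≥ 0` the map `s ↦ σ s t` is of class `K`, and for each fixed `s ≥ 0`
the map `t ↦ σ s t` is non-increasing with `σ s t → 0` as `t → +∞`. -/
def ClassKL (σ : ℝ → ℝ → ℝ) : Prop :=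
  ContinuousOn (fun p : ℝ × ℝ => σ p.1 p.2) (Set.Ici 0 ×ˢ Set.Ici 0) ∧
  (∀ t ∈ Set.Ici (0:ℝ), ClassK (fun s => σ s t)) ∧
  (∀ s ∈ Set.Ici (0:ℝ), AntitoneOn (σ s) (Set.Ici 0) ∧
    Filter.Tendsto (σ s) Filter.atTop (nhds 0)) ∧
  (∀ s ∈ Set.Ici (0:ℝ), ∀ t ∈ Set.Ici (0:ℝ), 0 ≤ σ s t)

/-- Absolute continuity of `y` on the interval `[a, b]`. -/
def AbsContOn {E : Type*} [NormedAddCommGroup E] (y : ℝ → E) (a b : ℝ) : Prop :=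
  ∀ ε > (0:ℝ), ∃ δ > (0:ℝ), ∀ n : ℕ, ∀ s t : ℕ → ℝ,
    (∀ i < n, a ≤ s i ∧ s i ≤ t i ∧ t i ≤ b) →
    (∀ i, i + 1 < n → t i ≤ s (i + 1)) →
    (∑ i ∈ Finset.range n, (t i - s i)) < δ →
    (∑ i ∈ Finset.range n, ‖y (t i) - y (s i)‖) < ε

/-!
Each coordinate is compared with a supersolution. On a sampling interval of length at most `1 / 4`,
affine barriers show that `|x₂|` stays below `max (|x₂ (τ i)| e^{-3 (t - τ i) / 4}) (4 S / 3)`,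
where `S` bounds `|v|`: if `|x₂ (τ i)|` is at least `S` the feedback `-2 x₂ (τ i)` wins, otherwise
the state stays comparable to `S`. This estimate composes over sampling intervals. The envelope
`P e^{-3 t / 4} + 4 S / 3` that results for `x₂` is then also a supersolution of the `x₁` equation,
because `x₁` decays at rate `2 ≥ 1 + 3 / 4` and has `x₂` as its input. Adding the two bounds gives
the gain `8 / 3 ≤ 2 √2`.
-/

open Set MeasureTheory Filter Topology

theorem exists_ordered_enumeration {ι α M : Type*} [Nonempty ι] [LinearOrder α] [AddCommMonoid M]
    {a b : ι → α} (F : Finset ι) (hlt : ∀ j ∈ F, a j < b j)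
    (hdisj : (F : Set ι).PairwiseDisjoint fun j => Ioc (a j) (b j)) :
    ∃ e : ℕ → ι, (∀ i < F.card, e i ∈ F) ∧ (∀ i, i + 1 < F.card → b (e i) ≤ a (e (i + 1))) ∧
      ∀ g : ι → M, ∑ i ∈ Finset.range F.card, g (e i) = ∑ j ∈ F, g j := by
  classical
  induction F using Finset.induction_on_max_value a with
  | empty => exact ⟨fun _ => Classical.arbitrary ι, by simp⟩
  | insert k F hk hmax ih =>
    obtain ⟨e, he_mem, he_le, he_sum⟩ := ih (fun j hj => hlt j (Finset.mem_insert_of_mem hj))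
      (hdisj.subset (Finset.coe_subset.2 (Finset.subset_insert k F)))
    have below_last : ∀ j ∈ F, b j ≤ a k := by
      intro j hj
      have hd := hdisj (Finset.mem_insert_of_mem hj) (Finset.mem_insert_self k F)
        (ne_of_mem_of_not_mem hj hk)
      rw [Function.onFun, Ioc_disjoint_Ioc, max_eq_right (hmax j hj)] at hd
      exact (min_le_iff.1 hd).resolve_right (hlt k (Finset.mem_insert_self k F)).not_ge
    have update_of_lt : ∀ i < F.card, Function.update e F.card k i = e i :=
      fun i hi => Function.update_of_ne hi.ne k e
    rw [Finset.card_insert_of_notMem hk]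
    refine ⟨Function.update e F.card k, fun i hi => ?_, fun i hi => ?_, fun g => ?_⟩
    · rcases Nat.lt_succ_iff_lt_or_eq.1 hi with hi | rfl
      · simpa only [update_of_lt i hi] using Finset.mem_insert_of_mem (he_mem i hi)
      · simp
    · have hiF : i < F.card := by omega
      rw [update_of_lt i hiF]
      rcases Nat.lt_succ_iff_lt_or_eq.1 hi with hi | hi
      · simpa only [update_of_lt _ hi] using he_le i hi
      · simpa only [hi, Function.update_self] using below_last _ (he_mem i hiF)
    · rw [Finset.sum_range_succ, Function.update_self, Finset.sum_insert hk, ← he_sum g, add_comm]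
      congr 1
      exact Finset.sum_congr rfl fun i hi => by rw [update_of_lt i (Finset.mem_range.1 hi)]

namespace AbsContOn

theorem of_norm_sub_le {E F : Type*} [NormedAddCommGroup E] [NormedAddCommGroup F] {y : ℝ → E}
    {f : ℝ → F} {a b : ℝ} (h : AbsContOn y a b) (hfy : ∀ s t, ‖f t - f s‖ ≤ ‖y t - y s‖) :
    AbsContOn f a b := by
  intro ε hε
  obtain ⟨δ, hδ, H⟩ := h ε hε
  exact ⟨δ, hδ, fun n s t hmem hord hlen =>
    (Finset.sum_le_sum fun i _ => hfy (s i) (t i)).trans_lt (H n s t hmem hord hlen)⟩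

theorem fst {E F : Type*} [NormedAddCommGroup E] [NormedAddCommGroup F] {x : ℝ → E} {y : ℝ → F}
    {a b : ℝ} (h : AbsContOn (fun t => (x t, y t)) a b) : AbsContOn x a b :=
  h.of_norm_sub_le fun s t => norm_fst_le ((x t, y t) - (x s, y s))

theorem snd {E F : Type*} [NormedAddCommGroup E] [NormedAddCommGroup F] {x : ℝ → E} {y : ℝ → F}
    {a b : ℝ} (h : AbsContOn (fun t => (x t, y t)) a b) : AbsContOn y a b :=
  h.of_norm_sub_le fun s t => norm_snd_le ((x t, y t) - (x s, y s))

theorem absolutelyContinuousOnInterval {E : Type*} [NormedAddCommGroup E] {y : ℝ → E} {a b : ℝ}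
    (hab : a ≤ b) (h : AbsContOn y a b) : AbsolutelyContinuousOnInterval y a b := by
  rw [absolutelyContinuousOnInterval_iff]
  intro ε hε
  obtain ⟨δ, hδ, H⟩ := h ε hε
  refine ⟨δ, hδ, ?_⟩
  rintro ⟨n, I⟩ ⟨hI_mem, hI_disj⟩ hlen
  let lo : ℕ → ℝ := fun i => min (I i).1 (I i).2
  let hi : ℕ → ℝ := fun i => max (I i).1 (I i).2
  let F : Finset ℕ := (Finset.range n).filter fun i => lo i < hi i
  have hF : F ⊆ Finset.range n := Finset.filter_subset _ _
  obtain ⟨e, he_mem, he_ord, he_sum⟩ := exists_ordered_enumeration (M := ℝ) F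
    (fun j hj => (Finset.mem_filter.1 hj).2) (hI_disj.subset (Finset.coe_subset.2 hF))
  have sum_eq : ∀ g : ℝ → ℝ → ℝ, (∀ z, g z z = 0) → (∀ s t, g s t = g t s) →
      ∑ i ∈ Finset.range F.card, g (lo (e i)) (hi (e i)) =
        ∑ i ∈ Finset.range n, g (I i).1 (I i).2 := by
    intro g hg_self hg_symm
    have hg_endpoints : ∀ i, g (lo i) (hi i) = g (I i).1 (I i).2 := by
      intro i
      rcases le_total (I i).1 (I i).2 with hle | hle
      · simp only [lo, hi, min_eq_left hle, max_eq_right hle]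
      · simp only [lo, hi, min_eq_right hle, max_eq_left hle, hg_symm (I i).2]
    rw [he_sum fun j => g (lo j) (hi j), Finset.sum_subset hF]
    · exact Finset.sum_congr rfl fun i _ => hg_endpoints i
    · intro i hi_mem hiF
      have : hi i ≤ lo i := not_lt.1 fun hlt => hiF (Finset.mem_filter.2 ⟨hi_mem, hlt⟩)
      rw [show lo i = hi i from min_le_max.antisymm this, hg_self]
  have hsum := H F.card (lo ∘ e) (hi ∘ e) ?_ he_ord ?_
  · simpa only [Function.comp_apply, ← dist_eq_norm,
      sum_eq (fun s t => dist (y t) (y s)) (fun _ => dist_self _) (fun _ _ => dist_comm _ _),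
      dist_comm (y (I _).2)] using hsum
  · intro i hi
    obtain ⟨h1, h2⟩ := hI_mem (e i) (hF (he_mem i hi))
    rw [uIcc_of_le hab] at h1 h2
    exact ⟨le_min h1.1 h2.1, min_le_max, max_le h1.2 h2.2⟩
  · have length_eq : ∀ i, hi i - lo i = dist (lo i) (hi i) := fun i => by
      rw [dist_comm, Real.dist_eq, abs_of_nonneg (sub_nonneg.2 min_le_max)]
    simpa only [Function.comp_apply, length_eq, sum_eq dist dist_self dist_comm] using hlen

end AbsContOn

section Comparison

variable {f : ℝ → ℝ} {a b : ℝ}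

theorem le_of_ae_deriv_nonpos (hab : a ≤ b) (hf : AbsolutelyContinuousOnInterval f a b)
    (hderiv : ∀ᵐ t, t ∈ Ioo a b → deriv f t ≤ 0) : f b ≤ f a := by
  rw [← sub_nonpos, ← hf.integral_deriv_eq_sub, intervalIntegral.integral_of_le hab,
    integral_Ioc_eq_integral_Ioo]
  exact integral_nonpos_of_ae ((ae_restrict_iff' measurableSet_Ioo).2 hderiv)

theorem exists_last_nonpos (hf : ContinuousOn f (Icc a b)) (hab : a ≤ b) (ha : f a ≤ 0) :
    ∃ s ∈ Icc a b, f s ≤ 0 ∧ ∀ t ∈ Ioc s b, 0 < f t := by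
  have hcompact : IsCompact (Icc a b ∩ f ⁻¹' Iic 0) :=
    isCompact_Icc.of_isClosed_subset (hf.preimage_isClosed_of_isClosed isClosed_Icc isClosed_Iic)
      inter_subset_left
  obtain ⟨s, ⟨hs, hfs⟩, hlast⟩ := hcompact.exists_isGreatest ⟨a, left_mem_Icc.2 hab, ha⟩
  refine ⟨s, hs, hfs, fun t ht => ?_⟩
  by_contra! hft
  exact ht.1.not_ge (hlast ⟨⟨hs.1.trans ht.1.le, ht.2⟩, hft⟩)

theorem nonpos_of_ae_deriv_le_mul (K : ℝ) (hab : a ≤ b)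
    (hf : AbsolutelyContinuousOnInterval f a b) (ha : f a ≤ 0)
    (hderiv : ∀ᵐ t, t ∈ Ioo a b → 0 < f t → deriv f t ≤ K * f t) : f b ≤ 0 := by
  obtain ⟨s, hs, hfs, hpos⟩ :=
    exists_last_nonpos (by simpa only [uIcc_of_le hab] using hf.continuousOn) hab ha
  have hsub : Icc s b ⊆ Icc a b := Icc_subset_Icc_left hs.1
  let damping : ℝ → ℝ := fun t => Real.exp (-K * t)
  have hdamping : ∀ t, HasDerivAt damping (-K * damping t) t := fun t => by
    simpa only [mul_comm (-K) (damping t), mul_one] using! ((hasDerivAt_id t).const_mul (-K)).exp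
  have hac : AbsolutelyContinuousOnInterval (damping * f) s b := by
    have hdamping_ac : AbsolutelyContinuousOnInterval damping s b :=
      ContDiffOn.absolutelyContinuousOnInterval (by fun_prop)
    exact hdamping_ac.mul (hf.mono (by rwa [uIcc_of_le hs.2, uIcc_of_le hab]))
  have hdecr : damping b * f b ≤ damping s * f s := by
    refine le_of_ae_deriv_nonpos hs.2 hac ?_
    filter_upwards [hderiv, hf.ae_differentiableAt] with t hle hdiff ht
    have htab : t ∈ Ioo a b := Ioo_subset_Ioo_left hs.1 ht
    have hft := (hdiff (Ioo_subset_Icc_self.trans Icc_subset_uIcc htab)).hasDerivAt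
    rw [((hdamping t).mul hft).deriv]
    have := mul_le_mul_of_nonneg_left (hle htab (hpos t (Ioo_subset_Ioc_self ht)))
      (Real.exp_pos (-K * t)).le
    simp only [damping]
    linarith
  exact nonpos_of_mul_nonpos_right
    (hdecr.trans (mul_nonpos_of_nonneg_of_nonpos (Real.exp_pos _).le hfs)) (Real.exp_pos _)

end Comparison

/-- The one-sided sector condition `y f(t, y) ≤ L y²`: against the Lyapunov function `y² / 2`, the
vector field `f` contributes growth at rate at most `2 L`. -/
def SectorBound (f : ℝ → ℝ → ℝ) (L : ℝ) : Prop :=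
  ∀ t y, y * f t y ≤ L * y ^ 2

namespace SectorBound

variable {f : ℝ → ℝ → ℝ} {L : ℝ}

theorem apply_le (hf : SectorBound f L) (t : ℝ) {y : ℝ} (hy : 0 < y) : f t y ≤ L * y :=
  le_of_mul_le_mul_left ((hf t y).trans_eq (by ring)) hy

theorem reflect (hf : SectorBound f L) : SectorBound (fun t y => -f t (-y)) L := fun t y => by
  simpa only [neg_mul, mul_neg, neg_sq] using hf t (-y)

end SectorBound

/-- Carathéodory solutions on `[a, b]` of the scalar equation `ẋ = f(t, x) + w(t)` with input `w`:
`x` is absolutely continuous and satisfies the equation almost everywhere. -/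
structure IsSolutionOn (f : ℝ → ℝ → ℝ) (w x : ℝ → ℝ) (a b : ℝ) : Prop where
  absolutelyContinuous : AbsolutelyContinuousOnInterval x a b
  ae_hasDerivAt : ∀ᵐ t, t ∈ Ioo a b → HasDerivAt x (f t (x t) + w t) t

namespace IsSolutionOn

variable {f : ℝ → ℝ → ℝ} {w x u : ℝ → ℝ} {a b c L : ℝ}

theorem mono_right (hx : IsSolutionOn f w x a b) (hc : c ∈ Icc a b) : IsSolutionOn f w x a c where
  absolutelyContinuous := hx.absolutelyContinuous.mono (by
    rw [uIcc_of_le hc.1, uIcc_of_le (hc.1.trans hc.2)]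
    exact Icc_subset_Icc_right hc.2)
  ae_hasDerivAt := by
    filter_upwards [hx.ae_hasDerivAt] with t ht htac
    exact ht (Ioo_subset_Ioo_right hc.2 htac)

theorem neg (hx : IsSolutionOn f w x a b) :
    IsSolutionOn (fun t y => -f t (-y)) (-w) (-x) a b where
  absolutelyContinuous := hx.absolutelyContinuous.neg
  ae_hasDerivAt := by
    filter_upwards [hx.ae_hasDerivAt] with t ht htab
    simpa only [Pi.neg_apply, neg_neg, neg_add] using (ht htab).neg

theorem le_of_supersolution (hx : IsSolutionOn f w x a b) (hf : SectorBound f L) (hab : a ≤ b)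
    (hu : AbsolutelyContinuousOnInterval u a b) (hu_nonneg : ∀ t ∈ Ioo a b, 0 ≤ u t)
    (hsuper : ∀ t ∈ Ioo a b, L * u t + w t ≤ deriv u t) (ha : x a ≤ u a) : x b ≤ u b := by
  refine sub_nonpos.1 (nonpos_of_ae_deriv_le_mul (f := x - u) L hab
    (hx.absolutelyContinuous.sub hu) (sub_nonpos.2 ha) ?_)
  filter_upwards [hx.ae_hasDerivAt, hu.ae_differentiableAt] with t hderiv hdiff ht hlt
  have hu_deriv := (hdiff (Ioo_subset_Icc_self.trans Icc_subset_uIcc ht)).hasDerivAt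
  rw [((hderiv ht).sub hu_deriv).deriv]
  have hsector := hf.apply_le t ((hu_nonneg t ht).trans_lt (sub_pos.1 hlt))
  simp only [Pi.sub_apply]
  linarith [hsuper t ht]

theorem abs_le_of_supersolution (hx : IsSolutionOn f w x a b) (hf : SectorBound f L) (hab : a ≤ b)
    (hu : AbsolutelyContinuousOnInterval u a b) (hu_nonneg : ∀ t ∈ Ioo a b, 0 ≤ u t)
    (hsuper : ∀ t ∈ Ioo a b, L * u t + |w t| ≤ deriv u t) (ha : |x a| ≤ u a) : |x b| ≤ u b :=
  abs_le'.2 ⟨hx.le_of_supersolution hf hab hu hu_nonneg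
      (fun t ht => (add_le_add_right (le_abs_self (w t)) _).trans (hsuper t ht)) (abs_le'.1 ha).1,
    hx.neg.le_of_supersolution hf.reflect hab hu hu_nonneg
      (fun t ht => (add_le_add_right (neg_le_abs (w t)) _).trans (hsuper t ht)) (abs_le'.1 ha).2⟩

theorem le_affine (hx : IsSolutionOn f w x a b) (hf : SectorBound f L) (hab : a ≤ b) {p q : ℝ}
    (hnonneg : ∀ t ∈ Ioo a b, 0 ≤ p + q * (t - a))
    (hslope : ∀ t ∈ Ioo a b, L * (p + q * (t - a)) + w t ≤ q) (ha : x a ≤ p) :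
    x b ≤ p + q * (b - a) := by
  refine hx.le_of_supersolution (u := fun t => p + q * (t - a)) hf hab
    (ContDiffOn.absolutelyContinuousOnInterval (by fun_prop)) hnonneg (fun t ht => ?_) (by simpa)
  simpa using hslope t ht

theorem abs_le_exp_envelope {κ P G : ℝ} (hκ : 0 ≤ κ) (hP : 0 ≤ P) (hG : 0 ≤ G) (hab : a ≤ b)
    (hx : IsSolutionOn f w x a b) (hf : SectorBound f (-(1 + κ)))
    (hw : ∀ t ∈ Ioo a b, |w t| ≤ P * Real.exp (-κ * t) + G)
    (ha : |x a| ≤ P * Real.exp (-κ * a) + G) : |x b| ≤ P * Real.exp (-κ * b) + G := by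
  refine hx.abs_le_of_supersolution (u := fun t => P * Real.exp (-κ * t) + G) hf hab
    (ContDiffOn.absolutelyContinuousOnInterval (by fun_prop)) (fun t _ => by positivity)
    (fun t ht => ?_) ha
  have hderiv : HasDerivAt (fun t => P * Real.exp (-κ * t) + G)
      (P * (Real.exp (-κ * t) * (-κ * 1))) t :=
    ((((hasDerivAt_id t).const_mul (-κ)).exp).const_mul P).add_const G
  rw [hderiv.deriv]
  linarith [hw t ht, mul_nonneg hκ hG]

variable {v : ℝ → ℝ} {h k S : ℝ}

-- The slope `q` of the affine barrier is the solution of `q = L q h + k x a + S`.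
theorem neg_le_of_sampled_feedback (hx : IsSolutionOn f (fun t => v t - k * x a) x a b)
    (hf : SectorBound f L) (hL : 0 ≤ L) (hLh : L * h < 1) (hk : 0 ≤ k) (hab : a ≤ b)
    (hgap : b - a ≤ h) (hS : 0 ≤ S) (hv : ∀ t ∈ Ioo a b, |v t| ≤ S) (ha : 0 ≤ x a) :
    -x b ≤ (k * x a + S) / (1 - L * h) * (b - a) := by
  have hden : 0 < 1 - L * h := sub_pos.2 hLh
  set q := (k * x a + S) / (1 - L * h)
  have hq_nonneg : 0 ≤ q := by positivity
  have hq_mul : q * (1 - L * h) = k * x a + S := div_mul_cancel₀ _ hden.ne'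
  have hbarrier := hx.neg.le_affine (p := 0) (q := q) hf.reflect hab
    (fun t ht => ?_) (fun t ht => ?_) (neg_nonpos.2 ha)
  · simpa only [Pi.neg_apply, zero_add] using hbarrier
  · have := sub_nonneg.2 ht.1.le
    positivity
  · have := mul_le_mul_of_nonneg_left (show t - a ≤ h by linarith [ht.2]) (mul_nonneg hL hq_nonneg)
    simp only [Pi.neg_apply]
    linarith [neg_le_of_abs_le (hv t ht)]

theorem le_of_sampled_feedback_of_input_le (hx : IsSolutionOn f (fun t => v t - k * x a) x a b)
    (hf : SectorBound f L) (hL : 0 ≤ L) (hLk : 1 + L ≤ k) (hkh : (k - 1 - L) * h ≤ 1)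
    (hab : a ≤ b) (hgap : b - a ≤ h) (hv : ∀ t ∈ Ioo a b, |v t| ≤ x a) (ha : 0 ≤ x a) :
    x b ≤ x a - (k - 1 - L) * x a * (b - a) := by
  have hrate : 0 ≤ k - 1 - L := by linarith
  have hbarrier := hx.le_affine (p := x a) (q := -((k - 1 - L) * x a)) hf hab
    (fun t ht => ?_) (fun t ht => ?_) le_rfl
  · linarith
  · have hle_one : (k - 1 - L) * (t - a) ≤ 1 :=
      (mul_le_mul_of_nonneg_left (by linarith [ht.2]) hrate).trans hkh
    linarith [mul_le_mul_of_nonneg_right hle_one ha]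
  · have := mul_nonneg (mul_nonneg (mul_nonneg hL hrate) ha) (sub_nonneg.2 ht.1.le)
    linarith [le_of_abs_le (hv t ht)]

theorem le_of_sampled_feedback (hx : IsSolutionOn f (fun t => v t - k * x a) x a b)
    (hf : SectorBound f L) (hL : 0 ≤ L) (hLh : L * h < 1) (hLk : L ≤ k) (hab : a ≤ b)
    (hgap : b - a ≤ h) (hS : 0 ≤ S) (hv : ∀ t ∈ Ioo a b, |v t| ≤ S) (ha : 0 ≤ x a) :
    x b ≤ x a + S / (1 - L * h) * (b - a) := by
  have hden : 0 < 1 - L * h := sub_pos.2 hLh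
  set q := S / (1 - L * h)
  have hq_nonneg : 0 ≤ q := by positivity
  have hq_mul : q * (1 - L * h) = S := div_mul_cancel₀ _ hden.ne'
  refine hx.le_affine hf hab (fun t ht => ?_) (fun t ht => ?_) le_rfl
  · have := sub_nonneg.2 ht.1.le
    positivity
  · have := mul_le_mul_of_nonneg_left (show t - a ≤ h by linarith [ht.2]) (mul_nonneg hL hq_nonneg)
    linarith [le_of_abs_le (hv t ht), mul_le_mul_of_nonneg_right hLk ha]

theorem abs_le_max_of_sampled_feedback_of_nonneg
    (hx : IsSolutionOn f (fun t => v t - 2 * x a) x a b) (hf : SectorBound f (1 / 4)) (hab : a ≤ b)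
    (hgap : b - a ≤ 1 / 4) (hS : 0 ≤ S) (hv : ∀ t ∈ Ioo a b, |v t| ≤ S) (ha : 0 ≤ x a) :
    |x b| ≤ max (x a * Real.exp (-(3 / 4) * (b - a))) (4 / 3 * S) := by
  have hlower := neg_le_of_sampled_feedback hx hf (by norm_num) (by norm_num) (by norm_num)
    hab hgap hS hv ha
  have hden : (1 - 1 / 4 * (1 / 4) : ℝ) = 15 / 16 := by norm_num
  rw [hden] at hlower
  have hgap_S := mul_le_mul_of_nonneg_left hgap hS
  rcases le_or_gt S (x a) with hSx | hxS
  · have hupper := le_of_sampled_feedback_of_input_le hx hf (by norm_num) (by norm_num)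
      (by norm_num) hab hgap (fun t ht => (hv t ht).trans hSx) ha
    have hexp := mul_le_mul_of_nonneg_left (Real.add_one_le_exp (-(3 / 4) * (b - a))) ha
    have hgap_x := mul_le_mul_of_nonneg_left hgap ha
    refine le_max_of_le_left (abs_le'.2 ⟨?_, ?_⟩) <;> linarith
  · have hupper := le_of_sampled_feedback hx hf (by norm_num) (by norm_num) (by norm_num)
      hab hgap hS hv ha
    rw [hden] at hupper
    have hgap_x := mul_le_mul_of_nonneg_right hxS.le (sub_nonneg.2 hab)
    refine le_max_of_le_right (abs_le'.2 ⟨?_, ?_⟩) <;> linarith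

theorem abs_le_max_of_sampled_feedback
    (hx : IsSolutionOn f (fun t => v t - 2 * x a) x a b) (hf : SectorBound f (1 / 4)) (hab : a ≤ b)
    (hgap : b - a ≤ 1 / 4) (hS : 0 ≤ S) (hv : ∀ t ∈ Ioo a b, |v t| ≤ S) :
    |x b| ≤ max (|x a| * Real.exp (-(3 / 4) * (b - a))) (4 / 3 * S) := by
  rcases le_total 0 (x a) with ha | ha
  · simpa only [abs_of_nonneg ha] using
      abs_le_max_of_sampled_feedback_of_nonneg hx hf hab hgap hS hv ha
  · have hinput : -(fun t => v t - 2 * x a) = fun t => (-v) t - 2 * (-x) a := by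
      ext t
      simp only [Pi.neg_apply]
      ring
    simpa only [Pi.neg_apply, abs_neg, abs_of_nonpos ha] using
      abs_le_max_of_sampled_feedback_of_nonneg (v := -v) (x := -x) (hinput ▸ hx.neg) hf.reflect
        hab hgap hS (fun t ht => by simpa only [Pi.neg_apply, abs_neg] using hv t ht)
        (neg_nonneg.2 ha)

end IsSolutionOn

/-- Sampling schedules: sampling times `0 = τ₀ ≤ τ₁ ≤ …` that exhaust `[0, ∞)`, with gaps of length
at most `h`. -/
structure IsSamplingSchedule (h : ℝ) (τ : ℕ → ℝ) : Prop where
  zero : τ 0 = 0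
  monotone : Monotone τ
  gap_le : ∀ i, τ (i + 1) - τ i ≤ h
  tendsto_atTop : Tendsto τ atTop atTop

theorem tendsto_atTop_of_recurrence {τ : ℕ → ℝ} {g : ℝ → ℝ} (hτ : ∀ i, τ (i + 1) = τ i + g (τ i))
    (hmono : Monotone τ) (hg : ∀ T, ∃ ε > 0, ∀ t ∈ Icc (τ 0) T, ε ≤ g t) :
    Tendsto τ atTop atTop := by
  refine (tendsto_atTop_of_monotone hmono).resolve_right ?_
  rintro ⟨T, hT⟩
  obtain ⟨ε, hε, hgε⟩ := hg T
  have hgap_zero : Tendsto (fun i => τ (i + 1) - τ i) atTop (𝓝 0) := by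
    simpa only [sub_self] using! (hT.comp (tendsto_add_atTop_nat 1)).sub hT
  refine hε.not_ge (ge_of_tendsto' hgap_zero fun i => ?_)
  rw [hτ, add_sub_cancel_left]
  exact hgε _ ⟨hmono i.zero_le, hmono.ge_of_tendsto hT i⟩

namespace IsSamplingSchedule

variable {h : ℝ} {τ : ℕ → ℝ}

theorem mono {h' : ℝ} (hτ : IsSamplingSchedule h τ) (hh : h ≤ h') : IsSamplingSchedule h' τ :=
  { hτ with gap_le := fun i => (hτ.gap_le i).trans hh }

theorem of_exp_recurrence {r : ℝ} {d : ℝ → ℝ} (hr : 0 < r) (hd : ∀ t, 0 ≤ d t)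
    (hd_bdd : ∀ b : ℝ, ∃ C, ∀ t ∈ Icc 0 b, d t ≤ C) (hτ0 : τ 0 = 0)
    (hτ : ∀ i, τ (i + 1) = τ i + r * Real.exp (-(d (τ i)))) : IsSamplingSchedule r τ := by
  have hmono : Monotone τ := monotone_nat_of_le_succ fun i => by
    rw [hτ]
    exact le_add_of_nonneg_right (by positivity)
  refine ⟨hτ0, hmono, fun i => ?_, tendsto_atTop_of_recurrence
    (g := fun t => r * Real.exp (-(d t))) hτ hmono fun T => ?_⟩
  · rw [hτ, add_sub_cancel_left]
    exact mul_le_of_le_one_right hr.le (Real.exp_le_one_iff.2 (neg_nonpos.2 (hd _)))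
  · obtain ⟨C, hC⟩ := hd_bdd T
    refine ⟨r * Real.exp (-C), by positivity, fun t ht => ?_⟩
    have := hC t (hτ0 ▸ ht)
    gcongr

theorem induction {p : ℝ → Prop} (hτ : IsSamplingSchedule h τ) (zero : p 0)
    (step : ∀ i, p (τ i) → ∀ t ∈ Icc (τ i) (τ (i + 1)), p t) {t : ℝ} (ht : 0 ≤ t) : p t := by
  have hnode : ∀ i, p (τ i) := by
    intro i
    induction i with
    | zero => rwa [hτ.zero]
    | succ i ih => exact step i ih _ (right_mem_Icc.2 (hτ.monotone i.le_succ))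
  have hbefore : ∀ n, t ≤ τ n → p t := by
    intro n hn
    induction n with
    | zero => exact (ht.antisymm' (hn.trans_eq hτ.zero)) ▸ zero
    | succ n ih => exact (le_total t (τ n)).elim ih fun hnt => step n (hnode n) t ⟨hnt, hn⟩
  obtain ⟨n, hn⟩ := (hτ.tendsto_atTop.eventually_ge_atTop t).exists
  exact hbefore n hn

variable {f : ℝ → ℝ → ℝ} {v w x : ℝ → ℝ} {T : ℝ}

theorem abs_le_max_of_sampled_feedback {S : ℝ} (hτ : IsSamplingSchedule (1 / 4) τ)
    (hf : SectorBound f (1 / 4))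
    (hx : ∀ i, IsSolutionOn f (fun t => v t - 2 * x (τ i)) x (τ i) (τ (i + 1)))
    (hS : 0 ≤ S) (hv : ∀ t ∈ Icc 0 T, |v t| ≤ S) {t : ℝ} (ht : t ∈ Icc 0 T) :
    |x t| ≤ max (|x 0| * Real.exp (-(3 / 4) * t)) (4 / 3 * S) := by
  refine hτ.induction (p := fun t => t ≤ T → |x t| ≤ max (|x 0| * Real.exp (-(3 / 4) * t))
    (4 / 3 * S)) (fun _ => by simp) (fun i ih t hti htT => ?_) ht.1 ht.2
  have hτi : 0 ≤ τ i := hτ.zero ▸ hτ.monotone i.zero_le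
  have hgap : t - τ i ≤ 1 / 4 := (sub_le_sub_right hti.2 _).trans (hτ.gap_le i)
  have hinterval := ((hx i).mono_right hti).abs_le_max_of_sampled_feedback hf hti.1 hgap hS
    fun s hs => hv s ⟨hτi.trans hs.1.le, hs.2.le.trans htT⟩
  refine hinterval.trans (max_le ?_ (le_max_right _ _))
  set decay := Real.exp (-(3 / 4) * (t - τ i))
  have hdecay : decay ≤ 1 := Real.exp_le_one_iff.2 (by linarith [hti.1])
  have hdecay_mul : Real.exp (-(3 / 4) * τ i) * decay = Real.exp (-(3 / 4) * t) := by
    rw [← Real.exp_add]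
    ring_nf
  calc |x (τ i)| * decay
      ≤ max (|x 0| * Real.exp (-(3 / 4) * τ i)) (4 / 3 * S) * decay := by
        gcongr
        exact ih (hti.1.trans htT)
    _ = max (|x 0| * Real.exp (-(3 / 4) * t)) (4 / 3 * S * decay) := by
        rw [max_mul_of_nonneg _ _ (Real.exp_pos _).le, mul_assoc, hdecay_mul]
    _ ≤ max (|x 0| * Real.exp (-(3 / 4) * t)) (4 / 3 * S) :=
        max_le_max_left _ (mul_le_of_le_one_right (by positivity) hdecay)

theorem abs_le_exp_envelope {κ P G : ℝ} (hτ : IsSamplingSchedule h τ) (hκ : 0 ≤ κ) (hG : 0 ≤ G)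
    (hf : SectorBound f (-(1 + κ))) (hx : ∀ i, IsSolutionOn f w x (τ i) (τ (i + 1)))
    (hw : ∀ t ∈ Icc 0 T, |w t| ≤ P * Real.exp (-κ * t) + G) (hP : |x 0| ≤ P)
    {t : ℝ} (ht : t ∈ Icc 0 T) : |x t| ≤ P * Real.exp (-κ * t) + G := by
  refine hτ.induction (p := fun t => t ≤ T → |x t| ≤ P * Real.exp (-κ * t) + G)
    (fun _ => by simpa using le_add_of_le_of_nonneg hP hG) (fun i ih t hti htT => ?_) ht.1 ht.2
  have hτi : 0 ≤ τ i := hτ.zero ▸ hτ.monotone i.zero_le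
  exact ((hx i).mono_right hti).abs_le_exp_envelope hκ ((abs_nonneg _).trans hP) hG hti.1 hf
    (fun s hs => hw s ⟨hτi.trans hs.1.le, hs.2.le.trans htT⟩) (ih (hti.1.trans htT))

end IsSamplingSchedule

theorem sectorBound_mul_sq_sub_cube {d : ℝ → ℝ} (hd : ∀ t, d t ∈ Icc (-1) 1) :
    SectorBound (fun t y => d t * y ^ 2 - y ^ 3) (1 / 4) := fun t y => by
  have hd_sq : d t ^ 2 ≤ 1 := (sq_le_one_iff_abs_le_one _).2 (abs_le.2 (hd t))
  calc y * (d t * y ^ 2 - y ^ 3)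
      = y ^ 2 * (d t ^ 2 / 4 - (y - d t / 2) ^ 2) := by ring
    _ ≤ y ^ 2 * (1 / 4) := by
        gcongr
        linarith [sq_nonneg (y - d t / 2)]
    _ = 1 / 4 * y ^ 2 := mul_comm _ _

theorem sectorBound_linear_sub_mul_cube {d : ℝ → ℝ} {k L : ℝ} (hkL : k ≤ L) (hd : ∀ t, 0 ≤ d t) :
    SectorBound (fun t y => k * y - d t * y ^ 3) L := fun t y =>
  calc y * (k * y - d t * y ^ 3)
      = k * y ^ 2 - d t * (y ^ 2) ^ 2 := by ring
    _ ≤ k * y ^ 2 := sub_le_self _ (mul_nonneg (hd t) (sq_nonneg _))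
    _ ≤ L * y ^ 2 := by gcongr

theorem classKL_const_mul_exp {C κ : ℝ} (hC : 0 < C) (hκ : 0 < κ) :
    ClassKL fun s t => C * s * Real.exp (-κ * t) := by
  refine ⟨by fun_prop, fun t _ => ⟨by fun_prop, ?_, by simp⟩, fun s hs => ⟨?_, ?_⟩, ?_⟩
  · intro s _ s' _ hss'
    simp only
    gcongr
  · intro t _ t' _ htt'
    have : 0 ≤ s := hs
    have := mul_le_mul_of_nonneg_left htt' hκ.le
    simp only [neg_mul]
    gcongr
  · have hexponent : Tendsto (fun t : ℝ => -κ * t) atTop atBot :=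
      tendsto_id.const_mul_atTop_of_neg (neg_neg_of_pos hκ)
    simpa only [mul_zero] using! (Real.tendsto_exp_atBot.comp hexponent).const_mul (C * s)
  · intro s hs t _
    have : 0 ≤ s := hs
    positivity

theorem sqrt_sq_add_sq_le_abs_add_abs (p q : ℝ) : √(p ^ 2 + q ^ 2) ≤ |p| + |q| := by
  refine Real.sqrt_le_iff.2 ⟨by positivity, ?_⟩
  rw [add_sq, sq_abs, sq_abs]
  linarith [mul_nonneg (mul_nonneg zero_le_two (abs_nonneg p)) (abs_nonneg q)]

theorem sqrt_sq_add_sq_le_of_sampled_cascade {f₁ f₂ : ℝ → ℝ → ℝ} {x₁ x₂ v : ℝ → ℝ} {τ : ℕ → ℝ}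
    {T S : ℝ} (hτ : IsSamplingSchedule (1 / 4) τ) (hf₁ : SectorBound f₁ (-(1 + 3 / 4)))
    (hf₂ : SectorBound f₂ (1 / 4)) (hx₁ : ∀ i, IsSolutionOn f₁ x₂ x₁ (τ i) (τ (i + 1)))
    (hx₂ : ∀ i, IsSolutionOn f₂ (fun t => v t - 2 * x₂ (τ i)) x₂ (τ i) (τ (i + 1)))
    (hv : ∀ t ∈ Icc 0 T, |v t| ≤ S) (hT : 0 ≤ T) :
    √(x₁ T ^ 2 + x₂ T ^ 2) ≤
      2 * √(x₁ 0 ^ 2 + x₂ 0 ^ 2) * Real.exp (-(3 / 4) * T) + 2 * √2 * S := by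
  have hS : 0 ≤ S := (abs_nonneg _).trans (hv T (right_mem_Icc.2 hT))
  set P := √(x₁ 0 ^ 2 + x₂ 0 ^ 2)
  have hx₁_zero : |x₁ 0| ≤ P := Real.abs_le_sqrt (le_add_of_nonneg_right (sq_nonneg _))
  have hx₂_zero : |x₂ 0| ≤ P := Real.abs_le_sqrt (le_add_of_nonneg_left (sq_nonneg _))
  have hx₂_envelope : ∀ t ∈ Icc 0 T, |x₂ t| ≤ P * Real.exp (-(3 / 4) * t) + 4 / 3 * S := by
    intro t ht
    calc |x₂ t| ≤ max (|x₂ 0| * Real.exp (-(3 / 4) * t)) (4 / 3 * S) :=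
          hτ.abs_le_max_of_sampled_feedback hf₂ hx₂ hS hv ht
      _ ≤ |x₂ 0| * Real.exp (-(3 / 4) * t) + 4 / 3 * S :=
          max_le_add_of_nonneg (by positivity) (by positivity)
      _ ≤ P * Real.exp (-(3 / 4) * t) + 4 / 3 * S := by gcongr
  have hT_mem : T ∈ Icc 0 T := right_mem_Icc.2 hT
  have hx₁_le := hτ.abs_le_exp_envelope (by norm_num) (by positivity) hf₁ hx₁ hx₂_envelope
    hx₁_zero hT_mem
  calc √(x₁ T ^ 2 + x₂ T ^ 2)
      ≤ |x₁ T| + |x₂ T| := sqrt_sq_add_sq_le_abs_add_abs _ _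
    _ ≤ 2 * P * Real.exp (-(3 / 4) * T) + 2 * (4 / 3) * S := by
        linarith [hx₂_envelope T hT_mem]
    _ ≤ 2 * P * Real.exp (-(3 / 4) * T) + 2 * √2 * S := by
        gcongr
        exact Real.le_sqrt_of_sq_le (by norm_num)

theorem stmt_11_general {x₁ x₂ d₁ d₂ v : ℝ → ℝ} {τ : ℕ → ℝ} (hτ : IsSamplingSchedule (1 / 4) τ)
    (hd₁ : ∀ t, 0 ≤ d₁ t) (hd₂ : ∀ t, d₂ t ∈ Icc (-1) 1)
    (hv : ∀ b : ℝ, ∃ C, ∀ t ∈ Icc 0 b, |v t| ≤ C)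
    (hac : ∀ i, AbsContOn (fun t => (x₁ t, x₂ t)) (τ i) (τ (i + 1)))
    (hode : ∀ i, ∀ᵐ t, t ∈ Ico (τ i) (τ (i + 1)) →
      HasDerivAt x₁ (-2 * x₁ t - d₁ t * x₁ t ^ 3 + x₂ t) t ∧
      HasDerivAt x₂ (d₂ t * x₂ t ^ 2 - x₂ t ^ 3 - 2 * x₂ (τ i) + v t) t)
    {t : ℝ} (ht : 0 ≤ t) :
    √(x₁ t ^ 2 + x₂ t ^ 2) ≤ 2 * √(x₁ 0 ^ 2 + x₂ 0 ^ 2) * Real.exp (-(3 / 4) * t) +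
      2 * √2 * sSup ((fun s => |v s|) '' Icc 0 t) := by
  have hτ_le : ∀ i, τ i ≤ τ (i + 1) := fun i => hτ.monotone i.le_succ
  have hx₁ : ∀ i, IsSolutionOn (fun t y => -2 * y - d₁ t * y ^ 3) x₂ x₁ (τ i) (τ (i + 1)) :=
    fun i => ⟨(hac i).fst.absolutelyContinuousOnInterval (hτ_le i), (hode i).mono
      fun t h ht => (h (Ioo_subset_Ico_self ht)).1⟩
  have hx₂ : ∀ i, IsSolutionOn (fun t y => d₂ t * y ^ 2 - y ^ 3)
      (fun t => v t - 2 * x₂ (τ i)) x₂ (τ i) (τ (i + 1)) :=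
    fun i => ⟨(hac i).snd.absolutelyContinuousOnInterval (hτ_le i), (hode i).mono
      fun t h ht => (h (Ioo_subset_Ico_self ht)).2.congr_deriv (by ring)⟩
  have hv_le_sSup : ∀ s ∈ Icc 0 t, |v s| ≤ sSup ((fun s => |v s|) '' Icc 0 t) := by
    obtain ⟨C, hC⟩ := hv t
    exact fun s hs => le_csSup ⟨C, forall_mem_image.2 hC⟩ (mem_image_of_mem _ hs)
  exact sqrt_sq_add_sq_le_of_sampled_cascade hτ (sectorBound_linear_sub_mul_cube (by norm_num) hd₁)
    (sectorBound_mul_sq_sub_cube hd₂) hx₁ hx₂ hv_le_sSup ht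

/-- UISS conclusion of Example 4.1 via the vector Lyapunov function
`V₁(x) = x₁²/2`, `V₂(x) = x₂²/2`: for constants `r > 0`, `δ ≥ 0`, `Δ ≥ δ`,
`1 < c < 2` with `r < 1/(5c²+2)` and `r ≤ 1/(6c³)`, there is a `KL` function `σ`
(depending only on the constants) such that every solution of the sampled-data system
(4.2) satisfies `|x(t)| ≤ σ(|x₀|, t) + 2√2 · sup_{0 ≤ τ ≤ t} |v(τ)|` for all `t ≥ 0`. -/
theorem stmt_11 (r δ Δ c : ℝ) (hr : 0 < r) (hδ : 0 ≤ δ) (hΔ : δ ≤ Δ)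
    (hc1 : 1 < c) (hc2 : c < 2)
    (hr1 : r < 1 / (5 * c ^ 2 + 2)) (hr2 : r ≤ 1 / (6 * c ^ 3)) :
    ∃ σ : ℝ → ℝ → ℝ, ClassKL σ ∧
      ∀ (x₁ x₂ d₁ d₂ dd v : ℝ → ℝ) (τ : ℕ → ℝ),
        Measurable d₁ → Measurable d₂ → Measurable dd → Measurable v →
        (∀ t, d₁ t ∈ Set.Icc δ Δ) → (∀ t, d₂ t ∈ Set.Icc (-1 : ℝ) 1) →
        (∀ t, 0 ≤ dd t) →
        (∀ b : ℝ, ∃ C, ∀ t ∈ Set.Icc (0:ℝ) b, dd t ≤ C) →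
        (∀ b : ℝ, ∃ C, ∀ t ∈ Set.Icc (0:ℝ) b, |v t| ≤ C) →
        τ 0 = 0 →
        (∀ i : ℕ, τ (i + 1) = τ i + r * Real.exp (-(dd (τ i)))) →
        (∀ i : ℕ, AbsContOn (fun t => (x₁ t, x₂ t)) (τ i) (τ (i + 1))) →
        (∀ i : ℕ, ∀ᵐ t ∂MeasureTheory.volume, t ∈ Set.Ico (τ i) (τ (i + 1)) →
          HasDerivAt x₁ (-2 * x₁ t - d₁ t * x₁ t ^ 3 + x₂ t) t ∧
          HasDerivAt x₂ (d₂ t * x₂ t ^ 2 - x₂ t ^ 3 - 2 * x₂ (τ i) + v t) t) →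
        ∀ t ≥ (0:ℝ),
          Real.sqrt (x₁ t ^ 2 + x₂ t ^ 2) ≤
            σ (Real.sqrt (x₁ 0 ^ 2 + x₂ 0 ^ 2)) t +
              2 * Real.sqrt 2 * sSup ((fun s => |v s|) '' Set.Icc 0 t) := by
  have hr_le : r ≤ 1 / 4 :=
    hr1.le.trans (one_div_le_one_div_of_le (by norm_num) (by nlinarith only [hc1]))
  refine ⟨fun s t => 2 * s * Real.exp (-(3 / 4) * t),
    classKL_const_mul_exp two_pos (by norm_num), ?_⟩
  intro x₁ x₂ d₁ d₂ dd v τ _ _ _ _ hd₁ hd₂ hdd hdd_bdd hv hτ0 hτ hac hode t ht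
  have hschedule : IsSamplingSchedule (1 / 4) τ :=
    (IsSamplingSchedule.of_exp_recurrence hr hdd hdd_bdd hτ0 hτ).mono hr_le
  exact stmt_11_general hschedule (fun t => hδ.trans (hd₁ t).1) hd₂ hv hac hode ht
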